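/- arXiv:1902.03505 — 5 statements merged into one kernel-verified Lean document; each statement's English description precedes it below -/
import Mathlib

section
/- Let d, N ≥ 2 with N ≥ d and let p ∈ (0,∞). If X* ∈ S(N,d) attains the minimum F_{p,N,d} of the p-frame potential FP_{p,N,d} over S(N,d), then the vectors of X* span ℝ^d (i.e., X* is a frame for ℝ^d). -/
open scoped RealInnerProductSpace
open Real

/-- The `p`-frame potential of an `N`-tuple of vectors in `ℝ^d`:
`FP_{p,N,d}(X) = Σ_{k≠ℓ} |⟨x_k,x_ℓ⟩|^p` (sum over ordered pairs). -/
noncomputable def framePotential (d N : ℕ) (p : ℝ)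
    (X : Fin N → EuclideanSpace ℝ (Fin d)) : ℝ :=
  ∑ k : Fin N, ∑ l : Fin N, if k ≠ l then |⟪X k, X l⟫| ^ p else 0

/-!
If a minimizer misses a direction, choose a unit vector `u` orthogonal to all its members. Replacing
a vector that is not orthogonal to some other member by `u` would strictly lower the energy, so the
minimizer is already orthonormal; having at least as many members as the dimension, it then spans.
-/

section PairEnergy

variable {𝕜 E ι : Type*} [RCLike 𝕜] [NormedAddCommGroup E] [InnerProductSpace 𝕜 E]

theorem exists_mem_orthogonal_norm_eq_one (K : Submodule 𝕜 E) [K.HasOrthogonalProjection]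
    (hK : K ≠ ⊤) : ∃ u ∈ Kᗮ, ‖u‖ = 1 := by
  obtain ⟨v, hv, hv0⟩ := Submodule.exists_mem_ne_zero_of_ne_bot
    (mt Submodule.orthogonal_eq_bot_iff.mp hK)
  exact ⟨(‖v‖⁻¹ : 𝕜) • v, Kᗮ.smul_mem _ hv, norm_smul_inv_norm hv0⟩

variable [DecidableEq ι] {X : ι → E} {k : ι} {u : E}

theorem inner_update_eq_zero (hu : ∀ i ≠ k, inner 𝕜 u (X i) = 0) {a b : ι} (hab : a ≠ b)
    (hk : a = k ∨ b = k) :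
    inner 𝕜 (Function.update X k u a) (Function.update X k u b) = 0 := by
  obtain rfl | rfl := hk
  · rw [Function.update_self, Function.update_of_ne hab.symm, hu b hab.symm]
  · rw [Function.update_self, Function.update_of_ne hab, inner_eq_zero_symm, hu a hab]

variable [Fintype ι]

/-- The energy `∑ f ⟨x_k, x_l⟩`, over ordered pairs `k ≠ l`, of a finite family of vectors. The
kernel `f` is arbitrary; `f t = |t| ^ p` gives the `p`-frame potential. -/
noncomputable def pairEnergy (f : 𝕜 → ℝ) (X : ι → E) : ℝ :=
  ∑ k, ∑ l, if k ≠ l then f (inner 𝕜 (X k) (X l)) else 0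

variable {f : 𝕜 → ℝ}

theorem pairEnergy_update_lt (hf : ∀ t ≠ 0, f 0 < f t) (hu : ∀ i ≠ k, inner 𝕜 u (X i) = 0)
    {l : ι} (hkl : k ≠ l) (hX : inner 𝕜 (X k) (X l) ≠ 0) :
    pairEnergy f (Function.update X k u) < pairEnergy f X := by
  have f_zero_le (t : 𝕜) : f 0 ≤ f t := by
    obtain rfl | ht := eq_or_ne t 0
    exacts [le_rfl, (hf t ht).le]
  have term_le (a b : ι) :
      (if a ≠ b then f (inner 𝕜 (Function.update X k u a) (Function.update X k u b)) else 0) ≤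
        if a ≠ b then f (inner 𝕜 (X a) (X b)) else 0 := by
    split_ifs with hab
    · by_cases hk : a = k ∨ b = k
      · rw [inner_update_eq_zero hu hab hk]
        exact f_zero_le _
      · obtain ⟨ha, hb⟩ := not_or.mp hk
        rw [Function.update_of_ne ha, Function.update_of_ne hb]
    · exact le_rfl
  refine Finset.sum_lt_sum (fun a _ ↦ Finset.sum_le_sum fun b _ ↦ term_le a b)
    ⟨k, Finset.mem_univ k, Finset.sum_lt_sum (fun b _ ↦ term_le k b) ⟨l, Finset.mem_univ l, ?_⟩⟩
  rw [if_pos hkl, if_pos hkl, inner_update_eq_zero hu hkl (.inl rfl)]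
  exact hf _ hX

theorem orthonormal_of_isMinOn_pairEnergy_of_span_ne_top (hf : ∀ t ≠ 0, f 0 < f t)
    (hX : ∀ i, ‖X i‖ = 1) (hmin : IsMinOn (pairEnergy f) {Y : ι → E | ∀ i, ‖Y i‖ = 1} X)
    (hspan : Submodule.span 𝕜 (Set.range X) ≠ ⊤) : Orthonormal 𝕜 X := by
  refine ⟨hX, fun k l hkl ↦ by_contra fun hne ↦ ?_⟩
  have := FiniteDimensional.span_of_finite 𝕜 (Set.finite_range X)
  obtain ⟨u, hu, hu_norm⟩ := exists_mem_orthogonal_norm_eq_one _ hspan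
  have hu_inner (i : ι) : inner 𝕜 u (X i) = 0 :=
    Submodule.inner_left_of_mem_orthogonal (Submodule.subset_span (Set.mem_range_self i)) hu
  have update_norm : ∀ i, ‖Function.update X k u i‖ = 1 :=
    (Function.forall_update_iff X fun _ x ↦ ‖x‖ = 1).mpr ⟨hu_norm, fun i _ ↦ hX i⟩
  exact (pairEnergy_update_lt hf (fun i _ ↦ hu_inner i) hkl hne).not_ge
    (isMinOn_iff.mp hmin _ update_norm)

theorem minimizer_of_pFramePotential_is_frame_general [FiniteDimensional 𝕜 E]
    (hcard : Module.finrank 𝕜 E ≤ Fintype.card ι) (hf : ∀ t ≠ 0, f 0 < f t)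
    (hX : ∀ i, ‖X i‖ = 1) (hmin : IsMinOn (pairEnergy f) {Y : ι → E | ∀ i, ‖Y i‖ = 1} X) :
    Submodule.span 𝕜 (Set.range X) = ⊤ := by
  by_contra hspan
  have hli : LinearIndependent 𝕜 X :=
    (orthonormal_of_isMinOn_pairEnergy_of_span_ne_top hf hX hmin hspan).linearIndependent
  exact hspan <| hli.span_eq_top_of_card_eq_finrank' (hli.fintype_card_le_finrank.antisymm hcard)

end PairEnergy

/-- Any minimizer of the `p`-frame potential over `S(N,d)` spans `ℝ^d`,
i.e. it is a frame for `ℝ^d`. -/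
theorem minimizer_of_pFramePotential_is_frame
    (d N : ℕ) (hd : 2 ≤ d) (hN : 2 ≤ N) (hdN : d ≤ N)
    (p : ℝ) (hp : 0 < p)
    (X : Fin N → EuclideanSpace ℝ (Fin d)) (hX : ∀ i, ‖X i‖ = 1)
    (hmin : ∀ Y : Fin N → EuclideanSpace ℝ (Fin d), (∀ i, ‖Y i‖ = 1) →
      framePotential d N p X ≤ framePotential d N p Y) :
    Submodule.span ℝ (Set.range X) = ⊤ := by
  have kernel_lt (t : ℝ) (ht : t ≠ 0) : |(0 : ℝ)| ^ p < |t| ^ p :=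
    Real.rpow_lt_rpow (abs_nonneg 0) (by simpa using ht) hp
  exact minimizer_of_pFramePotential_is_frame_general (𝕜 := ℝ) (f := fun t ↦ |t| ^ p)
    (by simpa using hdN) kernel_lt hX (isMinOn_iff.mpr hmin)
end

section
/- Let d, N ≥ 2 with N ≥ d. If X* ∈ S(N,d) attains the minimum F_{∞,N,d} of the coherence c(X) = max_{k≠ℓ} |⟨x_k,x_ℓ⟩| over S(N,d), then the vectors of X* span ℝ^d (i.e., X* is a frame for ℝ^d). -/
open scoped RealInnerProductSpace
open Real

/-- The coherence of an `N`-tuple of vectors in `ℝ^d`: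
`c(X) = max_{k≠ℓ} |⟨x_k,x_ℓ⟩|`. -/
noncomputable def coherence (d N : ℕ) (X : Fin N → EuclideanSpace ℝ (Fin d)) : ℝ :=
  sSup {v | ∃ k l : Fin N, k ≠ l ∧ v = |⟪X k, X l⟫|}

/-!
Suppose the unit vectors `X k` do not span, and let `e` be a unit vector orthogonal to all of them.
If the coherence `μ` is `0`, the family is orthonormal, so a dimension count shows that it has fewer
members than the dimension of the space. If `μ > 0`, tilt every `X k` towards `e` by a small amount
`s k`. The inner product of two tilted vectors is the old one scaled down by a factor at most
`1 - s k ^ 2 / 2`, plus the new term `s k * s l`. When the amounts decay geometrically with ratio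
below `μ / 2`, the loss beats the gain for every pair, so the coherence strictly decreases.
-/

theorem exists_pos_le_one_pairwise_lt_mul (ι : Type*) [Countable ι] {δ : ℝ} (hδ : 0 < δ) :
    ∃ s : ι → ℝ, (∀ k, 0 < s k) ∧ (∀ k, s k ≤ 1) ∧
      Pairwise fun k l ↦ s l < δ * s k ∨ s k < δ * s l := by
  obtain ⟨f, hf⟩ := exists_injective_nat ι
  obtain ⟨q, hq0, hq⟩ := exists_between (lt_min hδ one_pos)
  obtain ⟨hqδ, hq1⟩ := lt_min_iff.1 hq
  have pow_lt {m n : ℕ} (hmn : m < n) : q ^ n < δ * q ^ m :=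
    calc
      q ^ n ≤ q ^ (m + 1) := pow_le_pow_of_le_one hq0.le hq1.le hmn
      _ = q * q ^ m := pow_succ' q m
      _ < δ * q ^ m := by gcongr
  exact ⟨fun k ↦ q ^ f k, fun k ↦ pow_pos hq0 _, fun k ↦ pow_le_one₀ hq0.le hq1.le,
    fun k l hkl ↦ (hf.ne hkl).lt_or_gt.imp pow_lt pow_lt⟩

variable {𝕜 E ι : Type*} [RCLike 𝕜] [NormedAddCommGroup E] [InnerProductSpace 𝕜 E]

section Tilt

variable {e x y : E} {s t μ : ℝ}

variable (𝕜) in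
/-- The vector `x` tilted towards `e`: for orthogonal unit vectors `x` and `e` this is the rotation
of `x` in their plane by the angle whose sine is `s`. Meant for `|s| ≤ 1`, where the square root is
the matching cosine. -/
noncomputable def tilt (e : E) (s : ℝ) (x : E) : E :=
  ((√(1 - s ^ 2) : ℝ) : 𝕜) • x + (s : 𝕜) • e

theorem inner_tilt_tilt (he : ‖e‖ = 1) (hx : inner 𝕜 x e = 0) (hy : inner 𝕜 y e = 0) :
    inner 𝕜 (tilt 𝕜 e s x) (tilt 𝕜 e t y) =
      ((√(1 - s ^ 2) * √(1 - t ^ 2) : ℝ) : 𝕜) * inner 𝕜 x y + ((s * t : ℝ) : 𝕜) := by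
  have hy' : inner 𝕜 e y = 0 := inner_eq_zero_symm.1 hy
  have hee : inner 𝕜 e e = 1 := inner_self_eq_one_of_norm_eq_one he
  simp only [tilt, inner_add_left, inner_add_right, inner_smul_left, inner_smul_right,
    RCLike.conj_ofReal, hx, hy', hee, RCLike.ofReal_mul]
  ring

theorem norm_tilt (he : ‖e‖ = 1) (hx : ‖x‖ = 1) (hxe : inner 𝕜 x e = 0) (hs : |s| ≤ 1) :
    ‖tilt 𝕜 e s x‖ = 1 := by
  have hcos : √(1 - s ^ 2) * √(1 - s ^ 2) = 1 - s ^ 2 :=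
    Real.mul_self_sqrt (sub_nonneg.2 ((sq_le_one_iff_abs_le_one s).2 hs))
  have hself : inner 𝕜 (tilt 𝕜 e s x) (tilt 𝕜 e s x) = 1 := by
    rw [inner_tilt_tilt he hxe hxe, inner_self_eq_one_of_norm_eq_one hx, mul_one,
      ← RCLike.ofReal_add, hcos, ← sq, sub_add_cancel, RCLike.ofReal_one]
  rw [@norm_eq_sqrt_re_inner 𝕜, hself, RCLike.one_re, Real.sqrt_one]

theorem norm_inner_tilt_tilt_lt (he : ‖e‖ = 1) (hx : inner 𝕜 x e = 0) (hy : inner 𝕜 y e = 0)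
    (hxy : ‖inner 𝕜 x y‖ ≤ μ) (hs0 : 0 < s) (hs1 : s ≤ 1) (ht : 0 ≤ t) (hts : t < μ / 2 * s) :
    ‖inner 𝕜 (tilt 𝕜 e s x) (tilt 𝕜 e t y)‖ < μ := by
  have hcos_s : √(1 - s ^ 2) ≤ 1 - s ^ 2 / 2 := by
    have := Real.sqrt_one_add_le (x := -s ^ 2) (by nlinarith)
    rwa [neg_div, ← sub_eq_add_neg, ← sub_eq_add_neg] at this
  have hcos_t : √(1 - t ^ 2) ≤ 1 := Real.sqrt_le_one.2 (sub_le_self 1 (sq_nonneg t))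
  have hcos : √(1 - s ^ 2) * √(1 - t ^ 2) ≤ 1 - s ^ 2 / 2 :=
    (mul_le_of_le_one_right (Real.sqrt_nonneg _) hcos_t).trans hcos_s
  have hcos_nonneg : 0 ≤ √(1 - s ^ 2) * √(1 - t ^ 2) := by positivity
  calc
    ‖inner 𝕜 (tilt 𝕜 e s x) (tilt 𝕜 e t y)‖
      ≤ √(1 - s ^ 2) * √(1 - t ^ 2) * ‖inner 𝕜 x y‖ + s * t := by
        rw [inner_tilt_tilt he hx hy]
        refine (norm_add_le _ _).trans_eq ?_
        rw [norm_mul, RCLike.norm_of_nonneg hcos_nonneg,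
          RCLike.norm_of_nonneg (mul_nonneg hs0.le ht)]
    _ ≤ (1 - s ^ 2 / 2) * μ + s * t := by
        gcongr
        exact hcos_nonneg.trans hcos
    _ < (1 - s ^ 2 / 2) * μ + s * (μ / 2 * s) := by gcongr
    _ = μ := by ring

theorem exists_pairwise_norm_inner_lt [Countable ι] {X : ι → E} (hX : ∀ k, ‖X k‖ = 1)
    (he : ‖e‖ = 1) (hXe : ∀ k, inner 𝕜 (X k) e = 0) (hμ : 0 < μ)
    (hXμ : Pairwise fun k l ↦ ‖inner 𝕜 (X k) (X l)‖ ≤ μ) :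
    ∃ Y : ι → E, (∀ k, ‖Y k‖ = 1) ∧ Pairwise fun k l ↦ ‖inner 𝕜 (Y k) (Y l)‖ < μ := by
  obtain ⟨s, hs0, hs1, hs⟩ := exists_pos_le_one_pairwise_lt_mul ι (half_pos hμ)
  refine ⟨fun k ↦ tilt 𝕜 e (s k) (X k),
    fun k ↦ norm_tilt he (hX k) (hXe k) ((abs_of_pos (hs0 k)).trans_le (hs1 k)),
    fun k l hkl ↦ ?_⟩
  rcases hs hkl with hl | hk
  · exact norm_inner_tilt_tilt_lt he (hXe k) (hXe l) (hXμ hkl) (hs0 k) (hs1 k) (hs0 l).le hl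
  · rw [norm_inner_symm]
    exact norm_inner_tilt_tilt_lt he (hXe l) (hXe k) (hXμ hkl.symm) (hs0 l) (hs1 l) (hs0 k).le hk

end Tilt

section MutualCoherence

variable (𝕜) in
/-- The coherence of a finite family of vectors in an inner product space over `ℝ` or `ℂ`, the
largest modulus of an inner product of two members with distinct indices. It is `0` if there are no
two distinct indices. -/
noncomputable def mutualCoherence (X : ι → E) : ℝ :=
  sSup {v | ∃ k l : ι, k ≠ l ∧ v = ‖inner 𝕜 (X k) (X l)‖}

variable {X : ι → E} {μ : ℝ}

theorem coherence_eq_mutualCoherence {d N : ℕ} (X : Fin N → EuclideanSpace ℝ (Fin d)) :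
    coherence d N X = mutualCoherence ℝ X :=
  rfl

theorem mutualCoherence_nonneg : 0 ≤ mutualCoherence 𝕜 X := by
  refine Real.sSup_nonneg ?_
  rintro _ ⟨k, l, -, rfl⟩
  exact norm_nonneg _

theorem finite_setOf_norm_inner [Finite ι] (X : ι → E) :
    {v | ∃ k l : ι, k ≠ l ∧ v = ‖inner 𝕜 (X k) (X l)‖}.Finite := by
  refine (Set.finite_range fun p : ι × ι ↦ ‖inner 𝕜 (X p.1) (X p.2)‖).subset ?_
  rintro _ ⟨k, l, -, rfl⟩
  exact ⟨(k, l), rfl⟩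

theorem pairwise_norm_inner_le_mutualCoherence [Finite ι] (X : ι → E) :
    Pairwise fun k l ↦ ‖inner 𝕜 (X k) (X l)‖ ≤ mutualCoherence 𝕜 X :=
  fun k l hkl ↦ le_csSup (finite_setOf_norm_inner X).bddAbove ⟨k, l, hkl, rfl⟩

theorem mutualCoherence_lt [Finite ι] (hμ : 0 < μ)
    (hX : Pairwise fun k l ↦ ‖inner 𝕜 (X k) (X l)‖ < μ) : mutualCoherence 𝕜 X < μ := by
  rw [mutualCoherence]
  rcases Set.eq_empty_or_nonempty {v | ∃ k l : ι, k ≠ l ∧ v = ‖inner 𝕜 (X k) (X l)‖}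
    with hempty | hne
  · rwa [hempty, Real.sSup_empty]
  · obtain ⟨k, l, hkl, hmax⟩ := hne.csSup_mem (finite_setOf_norm_inner X)
    exact hmax.trans_lt (hX hkl)

theorem orthonormal_of_mutualCoherence_eq_zero [Finite ι] (hX : ∀ k, ‖X k‖ = 1)
    (h0 : mutualCoherence 𝕜 X = 0) : Orthonormal 𝕜 X :=
  ⟨hX, fun _ _ hkl ↦
    norm_le_zero_iff.1 ((pairwise_norm_inner_le_mutualCoherence X hkl).trans_eq h0)⟩

end MutualCoherence

section Minimizer

theorem exists_norm_eq_one_forall_inner_eq_zero [Finite ι] {X : ι → E}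
    (hX : Submodule.span 𝕜 (Set.range X) ≠ ⊤) :
    ∃ e : E, ‖e‖ = 1 ∧ ∀ k, inner 𝕜 (X k) e = 0 := by
  have : FiniteDimensional 𝕜 (Submodule.span 𝕜 (Set.range X)) :=
    FiniteDimensional.span_of_finite 𝕜 (Set.finite_range X)
  obtain ⟨v, hv, hv0⟩ :=
    Submodule.exists_mem_ne_zero_of_ne_bot (mt Submodule.orthogonal_eq_bot_iff.1 hX)
  refine ⟨(‖v‖⁻¹ : 𝕜) • v, norm_smul_inv_norm hv0, fun k ↦ ?_⟩
  rw [inner_smul_right, hv (X k) (Submodule.subset_span (Set.mem_range_self k)), mul_zero]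

theorem span_eq_top_or_orthonormal_of_minimizer [Finite ι] {X : ι → E} (hX : ∀ k, ‖X k‖ = 1)
    (hmin : ∀ Y : ι → E, (∀ k, ‖Y k‖ = 1) → mutualCoherence 𝕜 X ≤ mutualCoherence 𝕜 Y) :
    Submodule.span 𝕜 (Set.range X) = ⊤ ∨ Orthonormal 𝕜 X := by
  refine or_iff_not_imp_left.2 fun hspan ↦ orthonormal_of_mutualCoherence_eq_zero hX ?_
  by_contra hne
  have hpos : 0 < mutualCoherence 𝕜 X := mutualCoherence_nonneg.lt_of_ne' hne
  obtain ⟨e, he, hXe⟩ := exists_norm_eq_one_forall_inner_eq_zero hspan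
  obtain ⟨Y, hY, hYX⟩ :=
    exists_pairwise_norm_inner_lt hX he hXe hpos (pairwise_norm_inner_le_mutualCoherence X)
  exact (hmin Y hY).not_gt (mutualCoherence_lt hpos hYX)

theorem minimizer_of_coherence_is_frame_general [Finite ι] [FiniteDimensional 𝕜 E]
    (hcard : Module.finrank 𝕜 E ≤ Nat.card ι) {X : ι → E} (hX : ∀ k, ‖X k‖ = 1)
    (hmin : ∀ Y : ι → E, (∀ k, ‖Y k‖ = 1) → mutualCoherence 𝕜 X ≤ mutualCoherence 𝕜 Y) :
    Submodule.span 𝕜 (Set.range X) = ⊤ := by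
  refine (span_eq_top_or_orthonormal_of_minimizer hX hmin).elim id fun horth ↦ ?_
  have := Fintype.ofFinite ι
  have hli : LinearIndependent 𝕜 X := horth.linearIndependent
  rw [Nat.card_eq_fintype_card] at hcard
  exact hli.span_eq_top_of_card_eq_finrank' (hli.fintype_card_le_finrank.antisymm hcard)

end Minimizer

/-- Any minimizer of the coherence over `S(N,d)` spans `ℝ^d`,
i.e. it is a frame for `ℝ^d`. -/
theorem minimizer_of_coherence_is_frame
    (d N : ℕ) (hd : 2 ≤ d) (hN : 2 ≤ N) (hdN : d ≤ N)
    (X : Fin N → EuclideanSpace ℝ (Fin d)) (hX : ∀ i, ‖X i‖ = 1)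
    (hmin : ∀ Y : Fin N → EuclideanSpace ℝ (Fin d), (∀ i, ‖Y i‖ = 1) →
      coherence d N X ≤ coherence d N Y) :
    Submodule.span ℝ (Set.range X) = ⊤ := by
  simp only [coherence_eq_mutualCoherence] at hmin
  exact minimizer_of_coherence_is_frame_general (by simpa using hdN) hX hmin
end

section
/- Fix integers N, d ≥ 2. Then lim_{p→∞} (F_{p,N,d})^{1/p} = F_{∞,N,d}, where F_{p,N,d} is the minimum of the p-frame potential over S(N,d) and F_{∞,N,d} is the minimum coherence over S(N,d). -/
open scoped RealInnerProductSpace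
open Real

/-- `F_{p,N,d}`, the minimum of the `p`-frame potential over `S(N,d)`. -/
noncomputable def minFramePotential (d N : ℕ) (p : ℝ) : ℝ :=
  sInf (framePotential d N p '' {X | ∀ i, ‖X i‖ = 1})

/-- `F_{∞,N,d}`, the minimal coherence over `S(N,d)`. -/
noncomputable def minCoherence (d N : ℕ) : ℝ :=
  sInf (coherence d N '' {X | ∀ i, ‖X i‖ = 1})

/-!
For nonnegative reals indexed by a finite nonempty set `s`, the sum of the `p`-th powers lies
between `m ^ p` and `#s * m ^ p`, where `m` is the maximum. The constant `#s` does not depend on the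
family, so these bounds survive taking the infimum over a set of families, and `(#s) ^ (1 / p) → 1`
squeezes the `p`-th roots. Here `s` is the set of ordered pairs `(k, l)` with `k ≠ l`.
-/

open Filter Topology

section RpowSums

variable {α ι : Type*}

lemma tendsto_rpow_inv_of_rpow_le_of_le_mul_rpow {F : ℝ → ℝ} {m C : ℝ} (hm : 0 ≤ m) (hC : 0 < C)
    (hlower : ∀ᶠ p in atTop, m ^ p ≤ F p) (hupper : ∀ᶠ p in atTop, F p ≤ C * m ^ p) :
    Tendsto (fun p ↦ F p ^ (1 / p)) atTop (𝓝 m) := by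
  have hroot : Tendsto (fun p : ℝ ↦ C ^ (1 / p)) atTop (𝓝 1) := by
    simpa only [one_div, rpow_zero, Function.comp_def] using
      (continuousAt_const_rpow hC.ne').tendsto.comp tendsto_inv_atTop_zero
  have hbound : Tendsto (fun p : ℝ ↦ C ^ (1 / p) * m) atTop (𝓝 m) := by
    simpa only [one_mul] using hroot.mul_const m
  refine tendsto_of_tendsto_of_tendsto_of_le_of_le' tendsto_const_nhds hbound ?_ ?_
  · filter_upwards [eventually_gt_atTop 0, hlower] with p hp hF
    calc m = (m ^ p) ^ (1 / p) := by rw [one_div, rpow_rpow_inv hm hp.ne']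
      _ ≤ F p ^ (1 / p) := by gcongr
  · filter_upwards [eventually_gt_atTop 0, hlower, hupper] with p hp hF hF'
    have hF_nonneg : 0 ≤ F p := (rpow_nonneg hm p).trans hF
    calc F p ^ (1 / p) ≤ (C * m ^ p) ^ (1 / p) := by gcongr
      _ = C ^ (1 / p) * m := by
        rw [mul_rpow hC.le (rpow_nonneg hm p), one_div, rpow_rpow_inv hm hp.ne']

lemma sInf_image_rpow {S : Set α} (hS : S.Nonempty) {u : α → ℝ} (hu : ∀ x ∈ S, 0 ≤ u x)
    {p : ℝ} (hp : 0 ≤ p) : sInf ((fun x ↦ u x ^ p) '' S) = sInf (u '' S) ^ p := by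
  have hnonneg : u '' S ⊆ Set.Ici 0 := Set.image_subset_iff.2 hu
  have hmono : MonotoneOn (fun y : ℝ ↦ y ^ p) (u '' S) :=
    (monotoneOn_rpow_Ici_of_exponent_nonneg hp).mono hnonneg
  rw [hmono.map_csInf_of_continuousWithinAt
    (continuousAt_rpow_const _ _ (.inr hp)).continuousWithinAt (hS.image u)
    (bddBelow_Ici.mono hnonneg), Set.image_image]

lemma tendsto_sInf_image_rpow_inv {S : Set α} (hS : S.Nonempty) {u : α → ℝ} {v : ℝ → α → ℝ}
    {C : ℝ} (hC : 0 < C) (hu : ∀ x ∈ S, 0 ≤ u x)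
    (hlower : ∀ᶠ p in atTop, ∀ x ∈ S, u x ^ p ≤ v p x)
    (hupper : ∀ᶠ p in atTop, ∀ x ∈ S, v p x ≤ C * u x ^ p) :
    Tendsto (fun p ↦ sInf (v p '' S) ^ (1 / p)) atTop (𝓝 (sInf (u '' S))) := by
  have hpow_bdd (p : ℝ) : BddBelow ((fun x ↦ u x ^ p) '' S) :=
    ⟨0, Set.forall_mem_image.2 fun x hx ↦ rpow_nonneg (hu x hx) p⟩
  refine tendsto_rpow_inv_of_rpow_le_of_le_mul_rpow
    (Real.sInf_nonneg (Set.forall_mem_image.2 hu)) hC ?_ ?_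
  · filter_upwards [eventually_ge_atTop 0, hlower] with p hp hv
    rw [← sInf_image_rpow hS hu hp]
    exact le_csInf (hS.image _) <| Set.forall_mem_image.2 fun x hx ↦
      (csInf_le (hpow_bdd p) ⟨x, hx, rfl⟩).trans (hv x hx)
  · filter_upwards [eventually_ge_atTop 0, hlower, hupper] with p hp hv hv'
    have hv_bdd : BddBelow (v p '' S) :=
      ⟨0, Set.forall_mem_image.2 fun x hx ↦ (rpow_nonneg (hu x hx) p).trans (hv x hx)⟩
    rw [← sInf_image_rpow hS hu hp, ← div_le_iff₀' hC]
    refine le_csInf (hS.image _) <| Set.forall_mem_image.2 fun x hx ↦ ?_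
    rw [div_le_iff₀' hC]
    exact (csInf_le hv_bdd ⟨x, hx, rfl⟩).trans (hv' x hx)

lemma sup'_rpow_le_sum_rpow {s : Finset ι} (hs : s.Nonempty) {f : ι → ℝ}
    (hf : ∀ i ∈ s, 0 ≤ f i) (p : ℝ) : s.sup' hs f ^ p ≤ ∑ i ∈ s, f i ^ p := by
  obtain ⟨i, hi, hmax⟩ := s.exists_mem_eq_sup' hs f
  rw [hmax]
  exact Finset.single_le_sum (f := fun i ↦ f i ^ p) (fun j hj ↦ rpow_nonneg (hf j hj) p) hi

lemma sum_rpow_le_card_mul_sup'_rpow {s : Finset ι} (hs : s.Nonempty) {f : ι → ℝ}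
    (hf : ∀ i ∈ s, 0 ≤ f i) {p : ℝ} (hp : 0 ≤ p) :
    ∑ i ∈ s, f i ^ p ≤ s.card * s.sup' hs f ^ p := by
  rw [← nsmul_eq_mul]
  exact s.sum_le_card_nsmul _ _ fun i hi ↦ rpow_le_rpow (hf i hi) (s.le_sup' f hi) hp

theorem tendsto_sInf_image_sum_rpow_rpow_inv {S : Set α} (hS : S.Nonempty) {s : Finset ι}
    (hs : s.Nonempty) {f : α → ι → ℝ} (hf : ∀ x ∈ S, ∀ i ∈ s, 0 ≤ f x i) :
    Tendsto (fun p : ℝ ↦ sInf ((fun x ↦ ∑ i ∈ s, f x i ^ p) '' S) ^ (1 / p)) atTop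
      (𝓝 (sInf ((fun x ↦ s.sup' hs (f x)) '' S))) := by
  have hcard : (0 : ℝ) < s.card := mod_cast hs.card_pos
  have hsup_nonneg : ∀ x ∈ S, 0 ≤ s.sup' hs (f x) := fun x hx ↦
    (hf x hx _ hs.choose_spec).trans (s.le_sup' (f x) hs.choose_spec)
  refine tendsto_sInf_image_rpow_inv hS hcard hsup_nonneg ?_ ?_
  · exact .of_forall fun p x hx ↦ sup'_rpow_le_sum_rpow hs (hf x hx) p
  · filter_upwards [eventually_ge_atTop 0] with p hp x hx
    exact sum_rpow_le_card_mul_sup'_rpow hs (hf x hx) hp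

end RpowSums

section OffDiag

variable (d : ℕ) {N : ℕ}

lemma framePotential_eq_sum_offDiag (p : ℝ) :
    framePotential d N p = fun X ↦ ∑ q ∈ Finset.univ.offDiag, |⟪X q.1, X q.2⟫| ^ p := by
  ext X
  rw [framePotential, ← Finset.sum_product', ← Finset.sum_filter]
  congr 1
  ext q
  simp

lemma coherence_eq_sup'_offDiag (hpairs : (Finset.univ : Finset (Fin N)).offDiag.Nonempty) :
    coherence d N = fun X ↦ Finset.univ.offDiag.sup' hpairs fun q ↦ |⟪X q.1, X q.2⟫| := by
  ext X
  rw [coherence, Finset.sup'_eq_csSup_image]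
  congr 1
  ext v
  simp [eq_comm]

end OffDiag

/-- `lim_{p→∞} (F_{p,N,d})^{1/p} = F_{∞,N,d}`. -/
theorem tendsto_minFramePotential_rpow_inv
    (d N : ℕ) (hd : 2 ≤ d) (hN : 2 ≤ N) :
    Filter.Tendsto (fun p : ℝ => minFramePotential d N p ^ (1 / p))
      Filter.atTop (nhds (minCoherence d N)) := by
  have : NeZero d := ⟨by lia⟩
  obtain ⟨e, he⟩ := exists_norm_eq (EuclideanSpace ℝ (Fin d)) zero_le_one
  have hS : {X : Fin N → EuclideanSpace ℝ (Fin d) | ∀ i, ‖X i‖ = 1}.Nonempty :=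
    ⟨fun _ ↦ e, fun _ ↦ he⟩
  have hpairs : (Finset.univ : Finset (Fin N)).offDiag.Nonempty :=
    ⟨(⟨0, by lia⟩, ⟨1, by lia⟩), by simp⟩
  simp only [minFramePotential, minCoherence, framePotential_eq_sum_offDiag,
    coherence_eq_sup'_offDiag d hpairs]
  exact tendsto_sInf_image_sum_rpow_rpow_inv hS hpairs fun _ _ _ _ ↦ abs_nonneg _
end

section
/- Fix an integer d ≥ 2 and p ∈ (0,∞). Then lim_{N→∞} F_{p,N,d}/N² = P_{p,d}. -/
open scoped RealInnerProductSpace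
open Real MeasureTheory

/-- The probabilistic `p`-frame potential of a measure `μ` on the unit sphere `S^{d-1}`:
`PFP_{p,d}(μ) = ∫∫ |⟨x,y⟩|^p dμ(x)dμ(y)`. -/
noncomputable def probFramePotential (d : ℕ) (p : ℝ)
    (μ : Measure (Metric.sphere (0 : EuclideanSpace ℝ (Fin d)) 1)) : ℝ :=
  ∫ x, ∫ y, |⟪(x : EuclideanSpace ℝ (Fin d)), (y : EuclideanSpace ℝ (Fin d))⟫| ^ p ∂μ ∂μ

/-- `P_{p,d}`, the minimum of the probabilistic `p`-frame potential over all Borel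
probability measures on the unit sphere `S^{d-1}`. -/
noncomputable def minProbFramePotential (d : ℕ) (p : ℝ) : ℝ :=
  sInf {v | ∃ μ : Measure (Metric.sphere (0 : EuclideanSpace ℝ (Fin d)) 1),
    IsProbabilityMeasure μ ∧ v = probFramePotential d p μ}

/-!
For a bounded measurable pair interaction `K`, let `E_N` be the infimum of the energies of `N`
points and `I` the infimum of the energies of probability measures. If `N` points are drawn
independently from `μ`, each of the `N (N - 1)` ordered pairs has expected interaction `∬ K dμ dμ`,
so some configuration does at least as well as the mean, and `E_N ≤ N (N - 1) I`. Conversely, the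
energy of the empirical measure of `N` points is `N⁻²` times the full double sum, whose diagonal
contributes at most `N sup |K|`, so `N² I ≤ E_N + N sup |K|`. Dividing by `N²` squeezes `E_N / N²`
to `I`. The frame potentials are the case `K x y = |⟨x, y⟩|^p` on the sphere.
-/

section Energy

open Filter Topology

variable {α ι : Type*} [Fintype ι] {K : α → α → ℝ}

/-- The energy of the finite configuration `X` for the pair interaction `K`, summed over ordered
pairs of distinct indices; coinciding points at distinct indices do contribute. -/
def discreteEnergy (K : α → α → ℝ) (X : ι → α) : ℝ :=
  ∑ ij ∈ (Finset.univ : Finset ι).offDiag, K (X ij.1) (X ij.2)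

/-- The least energy of `N` points: the infimum of `discreteEnergy K` over all `N`-tuples.
It is `0` when these energies are not bounded below. -/
noncomputable def infDiscreteEnergy (K : α → α → ℝ) (N : ℕ) : ℝ :=
  ⨅ X : Fin N → α, discreteEnergy K X

theorem sum_sum_eq_sum_diag_add_discreteEnergy (K : α → α → ℝ) (X : ι → α) :
    ∑ i, ∑ j, K (X i) (X j) = ∑ i, K (X i) (X i) + discreteEnergy K X := by
  classical
  rw [discreteEnergy, ← Finset.sum_product', ← Finset.diag_union_offDiag,
    Finset.sum_union (Finset.disjoint_diag_offDiag _), Finset.sum_diag]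

theorem bddBelow_range_discreteEnergy {c : ℝ} (hc : ∀ x y, c ≤ K x y) :
    BddBelow (Set.range fun X : ι → α => discreteEnergy K X) :=
  ⟨_, Set.forall_mem_range.2 fun _ => Finset.card_nsmul_le_sum _ _ c fun _ _ => hc _ _⟩

variable [MeasurableSpace α]

/-- The energy `∬ K(x, y) dμ(x) dμ(y)` of the measure `μ` for the pair interaction `K`. -/
noncomputable def measureEnergy (K : α → α → ℝ) (μ : Measure α) : ℝ :=
  ∫ x, ∫ y, K x y ∂μ ∂μ

/-- The infimum of `measureEnergy K` over all probability measures. It is `0` when these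
energies are not bounded below. -/
noncomputable def infMeasureEnergy (K : α → α → ℝ) : ℝ :=
  ⨅ μ : ProbabilityMeasure α, measureEnergy K μ

theorem abs_measureEnergy_le {C : ℝ} (hC : ∀ x y, |K x y| ≤ C) (μ : Measure α)
    [IsProbabilityMeasure μ] : |measureEnergy K μ| ≤ C := by
  have abs_integral_le {f : α → ℝ} (hf : ∀ x, |f x| ≤ C) : |∫ x, f x ∂μ| ≤ C := by
    simpa using norm_integral_le_of_norm_le_const (μ := μ) (f := f) (ae_of_all _ hf)
  exact abs_integral_le fun x => abs_integral_le (hC x)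

theorem infMeasureEnergy_le {C : ℝ} (hC : ∀ x y, |K x y| ≤ C) (μ : Measure α)
    [hμ : IsProbabilityMeasure μ] : infMeasureEnergy K ≤ measureEnergy K μ :=
  ciInf_le (f := fun ν : ProbabilityMeasure α => measureEnergy K ν)
    ⟨-C, Set.forall_mem_range.2 fun ν => (abs_le.1 (abs_measureEnergy_le hC ν)).1⟩ ⟨μ, hμ⟩

section RandomPoints

theorem measurePreserving_eval_prodMk_eval {α : ι → Type*} [∀ i, MeasurableSpace (α i)]
    (μ : ∀ i, Measure (α i)) [∀ i, IsProbabilityMeasure (μ i)] {i j : ι} (hij : i ≠ j) :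
    MeasurePreserving (fun X : ∀ i, α i => (X i, X j)) (Measure.pi μ) ((μ i).prod (μ j)) where
  measurable := by fun_prop
  map_eq := by
    have hindep : ProbabilityTheory.iIndepFun (fun i (X : ∀ i, α i) => X i) (Measure.pi μ) :=
      ProbabilityTheory.iIndepFun_pi (X := fun _ => id) fun _ => aemeasurable_id
    rw [(ProbabilityTheory.indepFun_iff_map_prod_eq_prod_map_map
      (measurable_pi_apply i).aemeasurable (measurable_pi_apply j).aemeasurable).1
      (hindep.indepFun hij)]
    exact congrArg₂ Measure.prod (measurePreserving_eval μ i).map_eq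
      (measurePreserving_eval μ j).map_eq

variable {μ : Measure α} [IsProbabilityMeasure μ]

theorem integrable_eval_eval_pi (hK : Integrable (Function.uncurry K) (μ.prod μ)) {i j : ι}
    (hij : i ≠ j) : Integrable (fun X : ι → α => K (X i) (X j)) (Measure.pi fun _ => μ) :=
  (measurePreserving_eval_prodMk_eval (fun _ => μ) hij).integrable_comp_of_integrable hK

theorem integral_eval_eval_pi (hK : Integrable (Function.uncurry K) (μ.prod μ)) {i j : ι}
    (hij : i ≠ j) : ∫ X : ι → α, K (X i) (X j) ∂(Measure.pi fun _ => μ) = measureEnergy K μ := by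
  have hmp := measurePreserving_eval_prodMk_eval (fun _ : ι => μ) hij
  rw [measureEnergy, integral_integral hK, ← hmp.map_eq, integral_map hmp.aemeasurable]
  exact hmp.map_eq ▸ hK.aestronglyMeasurable

theorem integrable_discreteEnergy_pi (hK : Integrable (Function.uncurry K) (μ.prod μ)) :
    Integrable (fun X : ι → α => discreteEnergy K X) (Measure.pi fun _ => μ) :=
  integrable_finsetSum _ fun _ hij => integrable_eval_eval_pi hK (Finset.mem_offDiag.1 hij).2.2

theorem integral_discreteEnergy_pi (hK : Integrable (Function.uncurry K) (μ.prod μ)) :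
    ∫ X : ι → α, discreteEnergy K X ∂(Measure.pi fun _ => μ) =
      Fintype.card ι * (Fintype.card ι - 1) * measureEnergy K μ := by
  simp only [discreteEnergy]
  rw [integral_finsetSum _ fun _ hij =>
      integrable_eval_eval_pi hK (Finset.mem_offDiag.1 hij).2.2,
    Finset.sum_congr rfl fun _ hij => integral_eval_eval_pi hK (Finset.mem_offDiag.1 hij).2.2,
    Finset.sum_const, Finset.offDiag_card, nsmul_eq_mul, Finset.card_univ,
    Nat.cast_sub (Nat.le_mul_self _)]
  push_cast
  ring

theorem infDiscreteEnergy_le_mul_measureEnergy {c : ℝ} (hc : ∀ x y, c ≤ K x y)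
    (hK : Integrable (Function.uncurry K) (μ.prod μ)) (N : ℕ) :
    infDiscreteEnergy K N ≤ N * (N - 1) * measureEnergy K μ := by
  obtain ⟨X, hX⟩ := exists_le_integral (integrable_discreteEnergy_pi (ι := Fin N) hK)
  rw [integral_discreteEnergy_pi hK, Fintype.card_fin] at hX
  exact (ciInf_le (bddBelow_range_discreteEnergy hc) X).trans hX

end RandomPoints

section EmpiricalMeasure

/-- The empirical measure of the configuration `X`, which gives mass `1 / card ι` to each point,
counted with multiplicity. It is the zero measure when `ι` is empty. -/
noncomputable def empiricalMeasure (X : ι → α) : Measure α :=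
  (Fintype.card ι : ENNReal)⁻¹ • ∑ i, Measure.dirac (X i)

instance isProbabilityMeasure_empiricalMeasure [Nonempty ι] (X : ι → α) :
    IsProbabilityMeasure (empiricalMeasure X) :=
  ⟨by simp [empiricalMeasure, ENNReal.inv_mul_cancel]⟩

theorem integral_empiricalMeasure {f : α → ℝ} (hf : Measurable f) (X : ι → α) :
    ∫ x, f x ∂(empiricalMeasure X) = (Fintype.card ι : ℝ)⁻¹ * ∑ i, f (X i) := by
  rw [empiricalMeasure, integral_smul_measure, integral_finsetSum_measure fun i _ =>
    integrable_dirac' hf.stronglyMeasurable enorm_lt_top]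
  simp [integral_dirac' _ _ hf.stronglyMeasurable]

theorem measureEnergy_empiricalMeasure (hK : Measurable (Function.uncurry K)) (X : ι → α) :
    measureEnergy K (empiricalMeasure X) =
      ((Fintype.card ι : ℝ) ^ 2)⁻¹ * ∑ i, ∑ j, K (X i) (X j) := by
  have hright (x : α) : Measurable (K x) := hK.of_uncurry_left
  have hleft (y : α) : Measurable fun x => K x y := hK.of_uncurry_right
  simp only [measureEnergy, integral_empiricalMeasure (hright _)]
  rw [integral_empiricalMeasure (by fun_prop), ← Finset.mul_sum]
  ring

theorem sq_card_mul_infMeasureEnergy_le {C : ℝ} (hK : Measurable (Function.uncurry K))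
    (hC : ∀ x y, |K x y| ≤ C) (X : ι → α) :
    (Fintype.card ι : ℝ) ^ 2 * infMeasureEnergy K ≤ Fintype.card ι * C + discreteEnergy K X := by
  cases isEmpty_or_nonempty ι
  · simp [discreteEnergy]
  calc (Fintype.card ι : ℝ) ^ 2 * infMeasureEnergy K
      ≤ Fintype.card ι ^ 2 * measureEnergy K (empiricalMeasure X) := by
        gcongr
        exact infMeasureEnergy_le hC _
    _ = ∑ i, K (X i) (X i) + discreteEnergy K X := by
        rw [measureEnergy_empiricalMeasure hK, mul_inv_cancel_left₀ (by simp),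
          sum_sum_eq_sum_diag_add_discreteEnergy]
    _ ≤ Fintype.card ι * C + discreteEnergy K X := by
        gcongr
        simpa using Finset.sum_le_card_nsmul Finset.univ (fun i => K (X i) (X i)) C
          fun i _ => (abs_le.1 (hC _ _)).2

end EmpiricalMeasure

variable [Nonempty α] {C : ℝ}

theorem infDiscreteEnergy_le_mul_infMeasureEnergy (hK : Measurable (Function.uncurry K))
    (hC : ∀ x y, |K x y| ≤ C) (N : ℕ) :
    infDiscreteEnergy K N ≤ N * (N - 1) * infMeasureEnergy K := by
  have hN : (0 : ℝ) ≤ N * (N - 1) := by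
    cases N with
    | zero => simp
    | succ n =>
      rw [Nat.cast_succ, add_sub_cancel_right]
      positivity
  have : Nonempty (ProbabilityMeasure α) := ⟨Measure.dirac (Classical.arbitrary α), inferInstance⟩
  rw [infMeasureEnergy, Real.mul_iInf_of_nonneg hN]
  exact le_ciInf fun μ => infDiscreteEnergy_le_mul_measureEnergy (fun x y => (abs_le.1 (hC x y)).1)
    (.of_bound hK.aestronglyMeasurable C (ae_of_all _ fun z => hC z.1 z.2)) N

theorem sq_mul_infMeasureEnergy_sub_le_infDiscreteEnergy (hK : Measurable (Function.uncurry K))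
    (hC : ∀ x y, |K x y| ≤ C) (N : ℕ) :
    (N : ℝ) ^ 2 * infMeasureEnergy K - N * C ≤ infDiscreteEnergy K N :=
  le_ciInf fun X => sub_le_iff_le_add'.2 <| by
    simpa using sq_card_mul_infMeasureEnergy_le hK hC X

theorem tendsto_minFramePotential_div_sq_general (hK : Measurable (Function.uncurry K))
    (hC : ∀ x y, |K x y| ≤ C) :
    Tendsto (fun N : ℕ => infDiscreteEnergy K N / (N : ℝ) ^ 2) atTop (𝓝 (infMeasureEnergy K)) := by
  have hinv : Tendsto (fun N : ℕ => (N : ℝ)⁻¹) atTop (𝓝 0) := tendsto_inv_atTop_nhds_zero_nat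
  have hlower : Tendsto (fun N : ℕ => infMeasureEnergy K - (N : ℝ)⁻¹ * C) atTop
      (𝓝 (infMeasureEnergy K)) := by
    simpa using (hinv.mul_const C).const_sub (infMeasureEnergy K)
  have hupper : Tendsto (fun N : ℕ => (1 - (N : ℝ)⁻¹) * infMeasureEnergy K) atTop
      (𝓝 (infMeasureEnergy K)) := by
    simpa using (hinv.const_sub 1).mul_const (infMeasureEnergy K)
  refine tendsto_of_tendsto_of_tendsto_of_le_of_le' hlower hupper ?_ ?_
  · filter_upwards [eventually_gt_atTop 0] with N hN
    rw [le_div_iff₀ (by positivity)]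
    calc (infMeasureEnergy K - (N : ℝ)⁻¹ * C) * (N : ℝ) ^ 2
        = (N : ℝ) ^ 2 * infMeasureEnergy K - N * C := by field_simp
      _ ≤ infDiscreteEnergy K N := sq_mul_infMeasureEnergy_sub_le_infDiscreteEnergy hK hC N
  · filter_upwards [eventually_gt_atTop 0] with N hN
    rw [div_le_iff₀ (by positivity)]
    calc infDiscreteEnergy K N
        ≤ N * (N - 1) * infMeasureEnergy K := infDiscreteEnergy_le_mul_infMeasureEnergy hK hC N
      _ = (1 - (N : ℝ)⁻¹) * infMeasureEnergy K * (N : ℝ) ^ 2 := by field_simp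

end Energy

section FrameKernel

open Metric

variable {E : Type*} [NormedAddCommGroup E] [InnerProductSpace ℝ E]

/-- The pair interaction `|⟨x, y⟩|^p` on the unit sphere, whose discrete and continuous energies
are the `p`-frame potentials. -/
noncomputable def frameKernel (p : ℝ) (x y : sphere (0 : E) 1) : ℝ :=
  |⟪(x : E), (y : E)⟫| ^ p

theorem measurable_uncurry_frameKernel [MeasurableSpace E] [OpensMeasurableSpace E]
    [SecondCountableTopology E] (p : ℝ) :
    Measurable (Function.uncurry (frameKernel (E := E) p)) := by
  unfold frameKernel Function.uncurry
  fun_prop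

theorem abs_frameKernel_le_one {p : ℝ} (hp : 0 ≤ p) (x y : sphere (0 : E) 1) :
    |frameKernel p x y| ≤ 1 := by
  have hinner : |⟪(x : E), (y : E)⟫| ≤ 1 := by
    simpa using abs_real_inner_le_norm (x : E) (y : E)
  rw [frameKernel, abs_of_nonneg (by positivity)]
  exact Real.rpow_le_one (abs_nonneg _) hinner hp

theorem framePotential_coe_eq_discreteEnergy {d N : ℕ} (p : ℝ)
    (X : Fin N → sphere (0 : EuclideanSpace ℝ (Fin d)) 1) :
    framePotential d N p (fun i => X i) = discreteEnergy (frameKernel p) X := by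
  rw [framePotential, discreteEnergy, ← Finset.sum_product', ← Finset.sum_filter]
  refine Finset.sum_congr ?_ fun _ _ => rfl
  ext; simp

theorem minFramePotential_eq_infDiscreteEnergy (d N : ℕ) (p : ℝ) :
    minFramePotential d N p =
      infDiscreteEnergy (frameKernel (E := EuclideanSpace ℝ (Fin d)) p) N := by
  have hrange : {X : Fin N → EuclideanSpace ℝ (Fin d) | ∀ i, ‖X i‖ = 1} =
      Set.range fun (X : Fin N → sphere (0 : EuclideanSpace ℝ (Fin d)) 1) i => (X i).1 := by
    ext X
    exact ⟨fun hX => ⟨fun i => ⟨X i, by simpa using hX i⟩, rfl⟩, by rintro ⟨Y, rfl⟩; simp⟩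
  rw [minFramePotential, infDiscreteEnergy, iInf, hrange, ← Set.range_comp]
  simp only [Function.comp_def, framePotential_coe_eq_discreteEnergy]

theorem minProbFramePotential_eq_infMeasureEnergy (d : ℕ) (p : ℝ) :
    minProbFramePotential d p =
      infMeasureEnergy (frameKernel (E := EuclideanSpace ℝ (Fin d)) p) := by
  rw [minProbFramePotential, infMeasureEnergy, iInf]
  congr 1
  ext v
  exact ⟨fun ⟨μ, hμ, hv⟩ => ⟨⟨μ, hμ⟩, hv.symm⟩, fun ⟨μ, hv⟩ => ⟨μ, μ.2, hv.symm⟩⟩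

end FrameKernel

/-- `lim_{N→∞} F_{p,N,d}/N² = P_{p,d}`. -/
theorem tendsto_minFramePotential_div_sq
    (d : ℕ) (hd : 2 ≤ d) (p : ℝ) (hp : 0 < p) :
    Filter.Tendsto (fun N : ℕ => minFramePotential d N p / (N : ℝ) ^ 2)
      Filter.atTop (nhds (minProbFramePotential d p)) := by
  have : NeZero d := ⟨by lia⟩
  have : Nonempty (Metric.sphere (0 : EuclideanSpace ℝ (Fin d)) 1) :=
    (NormedSpace.sphere_nonempty.2 zero_le_one).to_subtype
  simpa only [minFramePotential_eq_infDiscreteEnergy, minProbFramePotential_eq_infMeasureEnergy]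
    using tendsto_minFramePotential_div_sq_general (measurable_uncurry_frameKernel p)
      (abs_frameKernel_le_one hp.le)
end

section
/- Fix an integer d ≥ 2 and p ∈ (0,2]. Then lim_{N→∞} F_{p,N,d}/N² = 1/d; in particular P_{p,d} = 1/d. -/
open scoped RealInnerProductSpace
open Real MeasureTheory

/-!
For `p ≤ 2` and unit vectors, `|⟪x, y⟫| ^ p ≥ ⟪x, y⟫ ^ 2`, and the double integral of `⟪x, y⟫ ^ 2`
against a measure is the squared Frobenius norm of its second moment matrix. By Cauchy–Schwarz on
the diagonal this is at least `trace² / d`, where the trace is the total mass; this is Welch's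
inequality. Applied to counting measure it gives `N² / d - N ≤ F_{p,N,d}`, since the terms
`k = ℓ` contribute `N`; applied to probability measures it gives `1 / d ≤ P_{p,d}`. Vectors spread
evenly over an orthonormal basis give the matching bounds `F_{p,N,d} ≤ N² / d` and
`P_{p,d} ≤ 1 / d`.
-/

section Welch

open Module

lemma sq_trace_le_card_mul_sum_sq {ι R : Type*} [Fintype ι] [CommRing R] [LinearOrder R]
    [IsStrictOrderedRing R] (A : Matrix ι ι R) :
    A.trace ^ 2 ≤ Fintype.card ι * ∑ i, ∑ j, A i j ^ 2 :=
  calc A.trace ^ 2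
    _ ≤ Fintype.card ι * ∑ i, A i i ^ 2 := sq_sum_le_card_mul_sum_sq
    _ ≤ Fintype.card ι * ∑ i, ∑ j, A i j ^ 2 := by
      gcongr with i
      exact Finset.single_le_sum (f := fun j => A i j ^ 2) (fun j _ => sq_nonneg _)
        (Finset.mem_univ i)

variable {α ι E : Type*} [MeasurableSpace α] [Fintype ι] [NormedAddCommGroup E]
  [InnerProductSpace ℝ E] {μ : Measure α} {X : α → E}

/-- The matrix of second moments `∫ ⟪b i, X⟫ * ⟪b j, X⟫ ∂μ` of a random vector `X` in an orthonormal
basis `b`; for `X` distributed over a frame it is the matrix of the frame operator. -/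
noncomputable def secondMomentMatrix (b : OrthonormalBasis ι ℝ E) (μ : Measure α) (X : α → E) :
    Matrix ι ι ℝ :=
  Matrix.of fun i j => ∫ a, ⟪b i, X a⟫ * ⟪b j, X a⟫ ∂μ

lemma integrable_inner_mul_inner (hX : MemLp X 2 μ) (v w : E) :
    Integrable (fun a => ⟪v, X a⟫ * ⟪w, X a⟫) μ :=
  (hX.const_inner v).integrable_mul (hX.const_inner w)

lemma trace_secondMomentMatrix (b : OrthonormalBasis ι ℝ E) (hX : MemLp X 2 μ) :
    (secondMomentMatrix b μ X).trace = ∫ a, ‖X a‖ ^ 2 ∂μ := by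
  simp_rw [← b.sum_sq_inner_right, sq]
  exact (integral_finsetSum _ fun i _ => integrable_inner_mul_inner hX (b i) (b i)).symm

lemma inner_sq_eq_sum_sum (b : OrthonormalBasis ι ℝ E) (x y : E) :
    ⟪x, y⟫ ^ 2 = ∑ i, ∑ j, (⟪b i, x⟫ * ⟪b j, x⟫) * (⟪b i, y⟫ * ⟪b j, y⟫) := by
  rw [← b.sum_inner_mul_inner x y, sq, Finset.sum_mul_sum]
  simp_rw [real_inner_comm x, mul_mul_mul_comm]

lemma integral_sum_sum_mul_const (c : ι → ι → ℝ) {f : ι → ι → α → ℝ}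
    (hf : ∀ i j, Integrable (f i j) μ) :
    ∫ a, ∑ i, ∑ j, f i j a * c i j ∂μ = ∑ i, ∑ j, (∫ a, f i j a ∂μ) * c i j := by
  have hfc (i j : ι) : Integrable (fun a => f i j a * c i j) μ := (hf i j).mul_const _
  rw [integral_finsetSum _ fun i _ => integrable_finsetSum _ fun j _ => hfc i j]
  refine Finset.sum_congr rfl fun i _ => ?_
  rw [integral_finsetSum _ fun j _ => hfc i j]
  exact Finset.sum_congr rfl fun j _ => integral_mul_const _ _

lemma integral_integral_inner_sq (b : OrthonormalBasis ι ℝ E) (hX : MemLp X 2 μ) :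
    ∫ x, ∫ y, ⟪X x, X y⟫ ^ 2 ∂μ ∂μ = ∑ i, ∑ j, secondMomentMatrix b μ X i j ^ 2 := by
  have hint (i j : ι) := integrable_inner_mul_inner hX (b i) (b j)
  have inner_integral (x : E) : ∫ y, ⟪x, X y⟫ ^ 2 ∂μ =
      ∑ i, ∑ j, ⟪b i, x⟫ * ⟪b j, x⟫ * secondMomentMatrix b μ X i j := by
    simp_rw [inner_sq_eq_sum_sum b, mul_comm (⟪b _, x⟫ * ⟪b _, x⟫)]
    exact integral_sum_sum_mul_const _ hint
  simp_rw [inner_integral, sq]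
  exact integral_sum_sum_mul_const _ hint

theorem sq_integral_norm_sq_le_finrank_mul_integral_inner_sq [FiniteDimensional ℝ E]
    (hX : MemLp X 2 μ) :
    (∫ a, ‖X a‖ ^ 2 ∂μ) ^ 2 ≤ finrank ℝ E * ∫ x, ∫ y, ⟪X x, X y⟫ ^ 2 ∂μ ∂μ := by
  have trace_bound := sq_trace_le_card_mul_sum_sq
    (secondMomentMatrix (stdOrthonormalBasis ℝ E) μ X)
  rwa [trace_secondMomentMatrix _ hX, ← integral_integral_inner_sq _ hX, Fintype.card_fin]
    at trace_bound

lemma sq_le_abs_rpow {t p : ℝ} (ht : |t| ≤ 1) (hp : 0 ≤ p) (hp2 : p ≤ 2) : t ^ 2 ≤ |t| ^ p :=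
  calc t ^ 2 = |t| ^ (2 : ℝ) := by rw [Real.rpow_two, sq_abs]
    _ ≤ |t| ^ p := Real.rpow_le_rpow_of_exponent_ge' (abs_nonneg t) ht hp hp2

lemma abs_inner_le_one {x y : E} (hx : ‖x‖ = 1) (hy : ‖y‖ = 1) : |⟪x, y⟫| ≤ 1 := by
  simpa only [hx, hy, one_mul] using abs_real_inner_le_norm x y

lemma integrable_abs_rpow_of_abs_le_one [IsFiniteMeasure μ] {f : α → ℝ} {p : ℝ} (hp : 0 ≤ p)
    (hf : AEStronglyMeasurable f μ) (hf1 : ∀ a, |f a| ≤ 1) :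
    Integrable (fun a => |f a| ^ p) μ := by
  refine .of_bound (C := 1) (hf.norm.aemeasurable.pow_const p).aestronglyMeasurable
    (ae_of_all _ fun a => ?_)
  rw [Real.norm_of_nonneg (by positivity)]
  exact Real.rpow_le_one (abs_nonneg _) (hf1 a) hp

lemma integral_inner_sq_le_integral_abs_inner_rpow [IsFiniteMeasure μ] {p : ℝ} (hp : 0 ≤ p)
    (hp2 : p ≤ 2) (hX : AEStronglyMeasurable X μ) (hX1 : ∀ a, ‖X a‖ = 1) :
    ∫ x, ∫ y, ⟪X x, X y⟫ ^ 2 ∂μ ∂μ ≤ ∫ x, ∫ y, |⟪X x, X y⟫| ^ p ∂μ ∂μ := by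
  have hle (x y : α) : |⟪X x, X y⟫| ≤ 1 := abs_inner_le_one (hX1 x) (hX1 y)
  have hprod : Integrable (fun z : α × α => |⟪X z.1, X z.2⟫| ^ p) (μ.prod μ) :=
    integrable_abs_rpow_of_abs_le_one hp (hX.comp_fst.inner hX.comp_snd) fun z => hle z.1 z.2
  have hsection (x : α) : Integrable (fun y => |⟪X x, X y⟫| ^ p) μ :=
    integrable_abs_rpow_of_abs_le_one hp (aestronglyMeasurable_const.inner hX) (hle x)
  refine integral_mono_of_nonneg (ae_of_all _ fun x => integral_nonneg fun y => sq_nonneg _)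
    hprod.integral_prod_left (ae_of_all _ fun x => ?_)
  exact integral_mono_of_nonneg (ae_of_all _ fun y => sq_nonneg _) (hsection x)
    (ae_of_all _ fun y => sq_le_abs_rpow (hle x y) hp hp2)

theorem sq_measureReal_univ_le_finrank_mul_integral_abs_inner_rpow [FiniteDimensional ℝ E]
    [IsFiniteMeasure μ] {p : ℝ} (hp : 0 ≤ p) (hp2 : p ≤ 2) (hX : AEStronglyMeasurable X μ)
    (hX1 : ∀ a, ‖X a‖ = 1) :
    μ.real Set.univ ^ 2 ≤ finrank ℝ E * ∫ x, ∫ y, |⟪X x, X y⟫| ^ p ∂μ ∂μ := by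
  have hX2 : MemLp X 2 μ := .of_bound hX 1 (ae_of_all _ fun a => (hX1 a).le)
  calc μ.real Set.univ ^ 2 = (∫ a, ‖X a‖ ^ 2 ∂μ) ^ 2 := by simp [hX1]
    _ ≤ finrank ℝ E * ∫ x, ∫ y, ⟪X x, X y⟫ ^ 2 ∂μ ∂μ :=
      sq_integral_norm_sq_le_finrank_mul_integral_inner_sq hX2
    _ ≤ finrank ℝ E * ∫ x, ∫ y, |⟪X x, X y⟫| ^ p ∂μ ∂μ :=
      mul_le_mul_of_nonneg_left
        (integral_inner_sq_le_integral_abs_inner_rpow hp hp2 hX hX1) (Nat.cast_nonneg _)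

end Welch

lemma abs_inner_rpow_of_orthonormal {ι E : Type*} [DecidableEq ι] [NormedAddCommGroup E]
    [InnerProductSpace ℝ E] {v : ι → E} (hv : Orthonormal ℝ v) {p : ℝ} (hp : p ≠ 0) (i j : ι) :
    |⟪v i, v j⟫| ^ p = if i = j then 1 else 0 := by
  rw [orthonormal_iff_ite.mp hv i j]
  split_ifs <;> simp [hp]

section FramePotential

variable {d N : ℕ} {p : ℝ} {X : Fin N → EuclideanSpace ℝ (Fin d)}

lemma framePotential_nonneg (X : Fin N → EuclideanSpace ℝ (Fin d)) :
    0 ≤ framePotential d N p X :=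
  Finset.sum_nonneg fun k _ => Finset.sum_nonneg fun l _ => by split_ifs <;> positivity

lemma sum_abs_inner_rpow_eq_framePotential_add (hX : ∀ k, ‖X k‖ = 1) :
    ∑ k, ∑ l, |⟪X k, X l⟫| ^ p = framePotential d N p X + N := by
  have split_diagonal (k l : Fin N) : |⟪X k, X l⟫| ^ p =
      (if k ≠ l then |⟪X k, X l⟫| ^ p else 0) + if k = l then 1 else 0 := by
    by_cases hkl : k = l
    · simp [← hkl, hX k]
    · simp [hkl]
  rw [Finset.sum_congr rfl fun k _ => Finset.sum_congr rfl fun l _ => split_diagonal k l]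
  simp [framePotential, Finset.sum_add_distrib]

theorem sq_div_sub_le_framePotential [NeZero d] (hp : 0 ≤ p) (hp2 : p ≤ 2)
    (hX : ∀ k, ‖X k‖ = 1) : (N : ℝ) ^ 2 / d - N ≤ framePotential d N p X := by
  have welch := sq_measureReal_univ_le_finrank_mul_integral_abs_inner_rpow (μ := .count) hp hp2
    StronglyMeasurable.of_discrete.aestronglyMeasurable hX
  simp only [integral_count, sum_abs_inner_rpow_eq_framePotential_add hX, Measure.count_real_univ,
    finrank_euclideanSpace_fin] at welch
  have hd : (0 : ℝ) < d := mod_cast NeZero.pos d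
  rw [sub_le_iff_le_add, div_le_iff₀' hd]
  simpa using welch

/-- The tuple of `N` unit vectors running cyclically through the standard basis of `ℝ^d`. -/
noncomputable def cyclicBasisTuple (d N : ℕ) [NeZero d] (k : Fin N) : EuclideanSpace ℝ (Fin d) :=
  EuclideanSpace.basisFun (Fin d) ℝ (Fin.ofNat d k)

lemma norm_cyclicBasisTuple [NeZero d] (k : Fin N) : ‖cyclicBasisTuple d N k‖ = 1 :=
  (EuclideanSpace.basisFun (Fin d) ℝ).norm_eq_one _

lemma card_filter_fin_eq_count (N : ℕ) (P : ℕ → Prop) [DecidablePred P] :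
    (Finset.univ.filter fun l : Fin N => P l).card = N.count P := by
  rw [Nat.count_eq_card_filter_range, Finset.card_filter, Finset.card_filter,
    Fin.sum_univ_eq_sum_range (fun l => if P l then 1 else 0)]

lemma card_filter_modEq_erase_le (hd : 0 < d) (k : Fin N) :
    ((Finset.univ.filter fun l : Fin N => l ≡ k [MOD d]).erase k).card ≤ N / d := by
  rw [Finset.card_erase_of_mem (by simp [Nat.ModEq.refl]),
    card_filter_fin_eq_count N (· ≡ k [MOD d]), Nat.count_modEq_card N hd]
  split_ifs <;> simp

lemma sum_ite_ne_abs_inner_cyclicBasisTuple_rpow [NeZero d] (hp : p ≠ 0) (k : Fin N) :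
    (∑ l, if k ≠ l then |⟪cyclicBasisTuple d N k, cyclicBasisTuple d N l⟫| ^ p else 0) =
      ((Finset.univ.filter fun l : Fin N => l ≡ k [MOD d]).erase k).card := by
  have same_vector (l : Fin N) : Fin.ofNat d k = Fin.ofNat d l ↔ l ≡ k [MOD d] :=
    Fin.ext_iff.trans eq_comm
  simp only [cyclicBasisTuple, abs_inner_rpow_of_orthonormal
    (EuclideanSpace.basisFun (Fin d) ℝ).orthonormal hp, same_vector, ← ite_and, Finset.sum_boole,
    ne_comm (a := k), ← Finset.filter_ne', Finset.filter_filter, and_comm]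

lemma framePotential_cyclicBasisTuple_le [NeZero d] (hp : p ≠ 0) :
    framePotential d N p (cyclicBasisTuple d N) ≤ (N : ℝ) ^ 2 / d :=
  calc framePotential d N p (cyclicBasisTuple d N)
    _ = ∑ k : Fin N, (((Finset.univ.filter fun l : Fin N => l ≡ k [MOD d]).erase k).card : ℝ) :=
      Finset.sum_congr rfl fun k _ => sum_ite_ne_abs_inner_cyclicBasisTuple_rpow hp k
    _ ≤ ∑ _ : Fin N, (N : ℝ) / d := by
      gcongr with k
      exact (Nat.cast_le.mpr (card_filter_modEq_erase_le (NeZero.pos d) k)).trans Nat.cast_div_le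
    _ = (N : ℝ) ^ 2 / d := by simp; ring

lemma minFramePotential_le (hX : ∀ k, ‖X k‖ = 1) :
    minFramePotential d N p ≤ framePotential d N p X :=
  csInf_le ⟨0, Set.forall_mem_image.mpr fun Y _ => framePotential_nonneg Y⟩ ⟨X, hX, rfl⟩

theorem minFramePotential_le_sq_div [NeZero d] (hp : p ≠ 0) :
    minFramePotential d N p ≤ (N : ℝ) ^ 2 / d :=
  (minFramePotential_le norm_cyclicBasisTuple).trans (framePotential_cyclicBasisTuple_le hp)

theorem sq_div_sub_le_minFramePotential [NeZero d] (hp : 0 ≤ p) (hp2 : p ≤ 2) :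
    (N : ℝ) ^ 2 / d - N ≤ minFramePotential d N p :=
  le_csInf ⟨_, cyclicBasisTuple d N, norm_cyclicBasisTuple, rfl⟩
    (Set.forall_mem_image.mpr fun _ hX => sq_div_sub_le_framePotential hp hp2 hX)

end FramePotential

section ProbFramePotential

variable {d : ℕ} {p : ℝ}

theorem one_div_le_probFramePotential [NeZero d] (hp : 0 ≤ p) (hp2 : p ≤ 2)
    (μ : Measure (Metric.sphere (0 : EuclideanSpace ℝ (Fin d)) 1)) [IsProbabilityMeasure μ] :
    1 / (d : ℝ) ≤ probFramePotential d p μ := by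
  have welch := sq_measureReal_univ_le_finrank_mul_integral_abs_inner_rpow (μ := μ) hp hp2
    continuous_subtype_val.aestronglyMeasurable norm_eq_of_mem_sphere
  have hd : (0 : ℝ) < d := mod_cast NeZero.pos d
  rw [div_le_iff₀' hd]
  simpa [probFramePotential] using welch

/-- The standard basis of `ℝ^d`, as a family of points of the unit sphere. -/
noncomputable def sphereBasis (d : ℕ) (i : Fin d) :
    Metric.sphere (0 : EuclideanSpace ℝ (Fin d)) 1 :=
  ⟨EuclideanSpace.basisFun (Fin d) ℝ i, by simp⟩

lemma orthonormal_sphereBasis (d : ℕ) :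
    Orthonormal ℝ fun i => (sphereBasis d i : EuclideanSpace ℝ (Fin d)) :=
  (EuclideanSpace.basisFun (Fin d) ℝ).orthonormal

/-- The uniform probability measure on the standard basis of `ℝ^d`, a minimizer of the
probabilistic `p`-frame potential for `0 < p ≤ 2`. -/
noncomputable def uniformBasisMeasure (d : ℕ) [NeZero d] :
    Measure (Metric.sphere (0 : EuclideanSpace ℝ (Fin d)) 1) :=
  (PMF.uniformOfFintype (Fin d)).toMeasure.map (sphereBasis d)

instance [NeZero d] : IsProbabilityMeasure (uniformBasisMeasure d) :=
  Measure.isProbabilityMeasure_map (measurable_of_finite _).aemeasurable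

lemma integral_uniformBasisMeasure [NeZero d]
    {f : Metric.sphere (0 : EuclideanSpace ℝ (Fin d)) 1 → ℝ} (hf : Measurable f) :
    ∫ x, f x ∂uniformBasisMeasure d = (d : ℝ)⁻¹ * ∑ i, f (sphereBasis d i) := by
  rw [uniformBasisMeasure, integral_map (measurable_of_finite _).aemeasurable
    hf.aestronglyMeasurable, PMF.integral_eq_sum]
  simp [Finset.mul_sum]

theorem probFramePotential_uniformBasisMeasure [NeZero d] (hp : p ≠ 0) :
    probFramePotential d p (uniformBasisMeasure d) = 1 / d := by
  have inner_integral (x : Metric.sphere (0 : EuclideanSpace ℝ (Fin d)) 1) :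
      ∫ y, |⟪(x : EuclideanSpace ℝ (Fin d)), y⟫| ^ p ∂uniformBasisMeasure d =
        (d : ℝ)⁻¹ * ∑ j, |⟪(x : EuclideanSpace ℝ (Fin d)), sphereBasis d j⟫| ^ p :=
    integral_uniformBasisMeasure (by fun_prop)
  simp_rw [probFramePotential, inner_integral]
  rw [integral_uniformBasisMeasure (by fun_prop)]
  simp [abs_inner_rpow_of_orthonormal (orthonormal_sphereBasis d) hp]

theorem minProbFramePotential_eq_one_div [NeZero d] (hp : 0 < p) (hp2 : p ≤ 2) :
    minProbFramePotential d p = 1 / d := by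
  refine IsLeast.csInf_eq ⟨⟨uniformBasisMeasure d, inferInstance,
    (probFramePotential_uniformBasisMeasure hp.ne').symm⟩, ?_⟩
  rintro _ ⟨μ, hμ, rfl⟩
  exact one_div_le_probFramePotential hp.le hp2 μ

end ProbFramePotential

/-- For `p ∈ (0,2]`, `lim_{N→∞} F_{p,N,d}/N² = 1/d`; in particular `P_{p,d} = 1/d`. -/
theorem tendsto_minFramePotential_div_sq_of_le_two
    (d : ℕ) (hd : 2 ≤ d) (p : ℝ) (hp : 0 < p) (hp2 : p ≤ 2) :
    Filter.Tendsto (fun N : ℕ => minFramePotential d N p / (N : ℝ) ^ 2)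
      Filter.atTop (nhds (1 / (d : ℝ))) ∧
    minProbFramePotential d p = 1 / (d : ℝ) := by
  have : NeZero d := ⟨by omega⟩
  refine ⟨?_, minProbFramePotential_eq_one_div hp hp2⟩
  have lower_tendsto : Filter.Tendsto (fun N : ℕ => 1 / (d : ℝ) - 1 / N) Filter.atTop
      (nhds (1 / d)) := by
    simpa using tendsto_const_nhds.sub (tendsto_one_div_atTop_nhds_zero_nat (𝕜 := ℝ))
  have eventually_pos : ∀ᶠ N : ℕ in Filter.atTop, (0 : ℝ) < N :=
    tendsto_natCast_atTop_atTop.eventually_gt_atTop 0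
  refine tendsto_of_tendsto_of_tendsto_of_le_of_le' lower_tendsto tendsto_const_nhds ?_ ?_
  · filter_upwards [eventually_pos] with N hN
    calc 1 / (d : ℝ) - 1 / N
      _ = ((N : ℝ) ^ 2 / d - N) / N ^ 2 := by field_simp
      _ ≤ minFramePotential d N p / N ^ 2 := by
        gcongr
        exact sq_div_sub_le_minFramePotential hp.le hp2
  · filter_upwards [eventually_pos] with N hN
    calc minFramePotential d N p / (N : ℝ) ^ 2
      _ ≤ (N : ℝ) ^ 2 / d / N ^ 2 := by
        gcongr
        exact minFramePotential_le_sq_div hp.ne'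
      _ = 1 / d := by field_simp
end
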